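/- Let G=(V,E) be a finite simple graph with V = {1,…,n}, let b ∈ ℕ, and let K : E → ℕ with K(e) ≤ b for every edge e. If f_{A_G} ∈ W_E^K, then K is sufficient for G, i.e., there exists K' : E → ℕ with K' ≤ K pointwise such that the coefficient of x^{K'} in P_G is nonzero; consequently G is algebraic total weight (1, b+1)-choosable. -/

import Mathlib

/-!
The apolar pairing `⟨p, q⟩ = ∑_α α! p_α q_α` makes multiplication by `X_v` adjoint to `∂/∂x_v`, so
by the chain rule the linear substitutions given by a matrix and by its transpose are adjoint. One
of the substitutions attached to the vertex-edge incidence matrix of `G` sends `f_{A_G}` to `P_G`,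
and the other sends `x^{K'}` to `∏ (x_i + x_j)^{K'(e)}`. Hence the pairing of the latter product
with `f_{A_G}` is `∏ K'(e)!` times the coefficient of `x^{K'}` in `P_G`. Since `f_{A_G}` is a
nonzero polynomial with integer coefficients, `⟨f_{A_G}, f_{A_G}⟩ > 0`, so an element of `W_E^K`
fails to be orthogonal to `f_{A_G}`, and then so does one of the spanning products.
-/

open scoped BigOperators

/-- The polynomial `P_G = ∏_{{i,j} ∈ E, i<j} (Σ_{e ∈ E(i)} x_e − Σ_{e ∈ E(j)} x_e)` in the
variables `{x_e : e ∈ E}`, where `E(v)` is the set of edges incident to `v`.  The endpoints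
of an edge `e = {i,j}` with `i < j` are `Sym2.inf e = i` and `Sym2.sup e = j`. -/
noncomputable def PG {n : ℕ} (G : SimpleGraph (Fin n)) [DecidableRel G.Adj] :
    MvPolynomial (↥G.edgeFinset) ℂ :=
  ∏ e : ↥G.edgeFinset,
    ((∑ e' : ↥G.edgeFinset, if Sym2.inf e.val ∈ e'.val then MvPolynomial.X e' else 0)
      - (∑ e' : ↥G.edgeFinset, if Sym2.sup e.val ∈ e'.val then MvPolynomial.X e' else 0))

/-- `K : E → ℕ` is sufficient for `G` if for some `K' ≤ K` the coefficient of `x^{K'}`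
in `P_G` is nonzero. -/
noncomputable def SufficientFor {n : ℕ} (G : SimpleGraph (Fin n)) [DecidableRel G.Adj]
    (K : ↥G.edgeFinset → ℕ) : Prop :=
  ∃ K' : ↥G.edgeFinset → ℕ, K' ≤ K ∧
    MvPolynomial.coeff (Finsupp.equivFunOnFinite.symm K') (PG G) ≠ 0

/-- The polynomial `f_{A_G} = ∏_{{i,j} ∈ E, i<j} (x_i − x_j)` in the vertex variables. -/
noncomputable def fAG {n : ℕ} (G : SimpleGraph (Fin n)) [DecidableRel G.Adj] :
    MvPolynomial (Fin n) ℂ :=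
  ∏ e : ↥G.edgeFinset,
    (MvPolynomial.X (Sym2.inf e.val) - MvPolynomial.X (Sym2.sup e.val))

/-- `W_E^K`: the complex vector space spanned by the polynomials
`∏_{{i,j} ∈ E, i<j} (x_i + x_j)^{K'(e)}` over all `K' ≤ K`. -/
noncomputable def WEK {n : ℕ} (G : SimpleGraph (Fin n)) [DecidableRel G.Adj]
    (K : ↥G.edgeFinset → ℕ) : Submodule ℂ (MvPolynomial (Fin n) ℂ) :=
  Submodule.span ℂ
    {p | ∃ K' : ↥G.edgeFinset → ℕ, K' ≤ K ∧
      p = ∏ e : ↥G.edgeFinset,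
        (MvPolynomial.X (Sym2.inf e.val) + MvPolynomial.X (Sym2.sup e.val)) ^ K' e}

open MvPolynomial
open scoped Matrix Nat

section Apolar

variable {σ τ R S : Type*}

section CommSemiring

variable [CommSemiring R] [CommSemiring S]

variable (σ R) in
/-- The apolar (Fischer) pairing `⟨p, q⟩ = ∑_α α! p_α q_α`, which is the constant term of `p(∂) q`.
It is bilinear: over `ℂ` neither argument is conjugated. -/
noncomputable def apolar : LinearMap.BilinForm R (MvPolynomial σ R) :=
  (basisMonomials σ R).constr R fun α ↦ (α.prod fun _ k ↦ (k ! : R)) • lcoeff R α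

lemma apolar_monomial (α : σ →₀ ℕ) (a : R) (q : MvPolynomial σ R) :
    apolar σ R (monomial α a) q = a * (α.prod fun _ k ↦ (k ! : R)) * coeff α q := by
  have h : monomial α a = a • basisMonomials σ R α := by
    simp [coe_basisMonomials, smul_monomial]
  rw [h, map_smul, apolar, Module.Basis.constr_basis]
  simp [mul_assoc]

lemma apolar_C (a : R) (q : MvPolynomial σ R) : apolar σ R (C a) q = a * constantCoeff q := by
  simpa [constantCoeff_eq] using apolar_monomial 0 a q

lemma apolar_self (p : MvPolynomial σ R) :
    apolar σ R p p = ∑ α ∈ p.support, coeff α p * (α.prod fun _ k ↦ (k ! : R)) * coeff α p := by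
  conv_lhs => enter [1, 2]; rw [p.as_sum]
  simp only [map_sum, LinearMap.sum_apply, apolar_monomial]

lemma apolar_map (f : R →+* S) (p q : MvPolynomial σ R) :
    apolar σ S (map f p) (map f q) = f (apolar σ R p q) := by
  induction p using MvPolynomial.induction_on' with
  | monomial α a => simp [apolar_monomial, map_finsuppProd, coeff_map]
  | add p₁ p₂ h₁ h₂ => simp only [map_add, LinearMap.add_apply, h₁, h₂]

lemma finsuppProd_factorial_add_single (α : σ →₀ ℕ) (v : σ) :
    ((α + Finsupp.single v 1).prod fun _ k ↦ (k ! : R))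
      = (α v + 1) * α.prod fun _ k ↦ (k ! : R) := by
  classical
  rw [← Finsupp.mul_prod_erase' (α + Finsupp.single v 1) v _ (by simp),
    ← Finsupp.mul_prod_erase' α v _ (by simp), Finsupp.erase_add, Finsupp.erase_single]
  simp [Nat.factorial_succ, mul_assoc]

lemma apolar_mul_X (p q : MvPolynomial σ R) (v : σ) :
    apolar σ R (p * X v) q = apolar σ R p (pderiv v q) := by
  induction p using MvPolynomial.induction_on' with
  | add p₁ p₂ h₁ h₂ => simp only [add_mul, map_add, LinearMap.add_apply, h₁, h₂]
  | monomial α a =>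
    rw [X, monomial_mul, apolar_monomial, apolar_monomial, coeff_pderiv,
      finsuppProd_factorial_add_single]
    ring

lemma derivation_aeval {A M : Type*} [Fintype σ] [CommSemiring A] [Algebra R A] [AddCommMonoid M]
    [Module A M] [Module R M] (D : Derivation R A M) (f : σ → A) (p : MvPolynomial σ R) :
    D (aeval f p) = ∑ s, aeval f (pderiv s p) • D (f s) := by
  classical
  induction p using MvPolynomial.induction_on with
  | C a => simp
  | add p q hp hq => simp only [map_add, add_smul, Finset.sum_add_distrib, hp, hq]
  | mul_X p i hp =>
    have product_rule (s : σ) : aeval f (pderiv s (p * X i)) • D (f s)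
        = (if i = s then aeval f p • D (f s) else 0) + f i • aeval f (pderiv s p) • D (f s) := by
      rw [pderiv_mul, pderiv_X, Pi.single_apply]
      split_ifs <;> simp [add_smul, ← mul_smul, mul_comm, add_comm]
    simp only [product_rule, Finset.sum_add_distrib, ← Finset.smul_sum, ← hp]
    simp

lemma constantCoeff_bind₁_of_constantCoeff_eq_zero {f : σ → MvPolynomial τ R}
    (hf : ∀ s, constantCoeff (f s) = 0) (p : MvPolynomial σ R) :
    constantCoeff (bind₁ f p) = constantCoeff p := by
  induction p using MvPolynomial.induction_on with
  | C a => simp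
  | add p q hp hq => simp only [map_add, hp, hq]
  | mul_X p s _ => simp [hf]

lemma toMvPolynomial_eq_sum_smul_X [Fintype τ] (M : Matrix σ τ R) (s : σ) :
    M.toMvPolynomial s = ∑ t, M s t • X t := by
  simp [Matrix.toMvPolynomial, X, smul_monomial]

lemma pderiv_toMvPolynomial [Fintype τ] (M : Matrix σ τ R) (s : σ) (t : τ) :
    pderiv t (M.toMvPolynomial s) = C (M s t) := by
  classical
  simp [toMvPolynomial_eq_sum_smul_X, pderiv_X, Pi.single_apply, smul_eq_C_mul]

variable [Fintype σ] [Fintype τ]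

theorem apolar_bind₁_transpose (M : Matrix σ τ R) (p : MvPolynomial τ R) (q : MvPolynomial σ R) :
    apolar σ R (bind₁ Mᵀ.toMvPolynomial p) q = apolar τ R p (bind₁ M.toMvPolynomial q) := by
  induction p using MvPolynomial.induction_on generalizing q with
  | C a =>
    rw [bind₁_C_right, apolar_C, apolar_C, constantCoeff_bind₁_of_constantCoeff_eq_zero (by simp)]
  | add p₁ p₂ h₁ h₂ => simp only [map_add, LinearMap.add_apply, h₁, h₂]
  | mul_X p t hp =>
    have chain_rule : pderiv t (bind₁ M.toMvPolynomial q)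
        = ∑ s, M s t • bind₁ M.toMvPolynomial (pderiv s q) :=
      (derivation_aeval (pderiv t) M.toMvPolynomial q).trans <| by
        simp [pderiv_toMvPolynomial, smul_eq_C_mul, mul_comm]
    rw [apolar_mul_X, chain_rule, map_mul, bind₁_X_right, toMvPolynomial_eq_sum_smul_X,
      Finset.mul_sum]
    simp only [Matrix.transpose_apply, mul_smul_comm, map_sum, map_smul, LinearMap.sum_apply,
      LinearMap.smul_apply, apolar_mul_X, hp]

theorem exists_coeff_bind₁_ne_zero_of_mem_span (M : Matrix σ τ R) {A : Set (τ →₀ ℕ)}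
    {p q : MvPolynomial σ R}
    (hp : p ∈ Submodule.span R ((fun α ↦ bind₁ Mᵀ.toMvPolynomial (monomial α 1)) '' A))
    (hpq : apolar σ R p q ≠ 0) : ∃ α ∈ A, coeff α (bind₁ M.toMvPolynomial q) ≠ 0 := by
  by_contra! hcoeff
  have orthogonal : Set.EqOn ((apolar σ R).flip q) (0 : MvPolynomial σ R →ₗ[R] R)
      ((fun α ↦ bind₁ Mᵀ.toMvPolynomial (monomial α 1)) '' A) := by
    rintro _ ⟨α, hα, rfl⟩
    simp [apolar_bind₁_transpose, apolar_monomial, hcoeff α hα]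
  exact hpq (by simpa using LinearMap.eqOn_span orthogonal hp)

end CommSemiring

theorem apolar_self_pos [CommRing R] [LinearOrder R] [IsStrictOrderedRing R]
    {p : MvPolynomial σ R} (hp : p ≠ 0) : 0 < apolar σ R p p := by
  rw [apolar_self]
  refine Finset.sum_pos (fun α hα ↦ ?_) (support_nonempty.mpr hp)
  have factorial_pos : 0 < α.prod fun _ k ↦ (k ! : R) :=
    Finset.prod_pos fun v _ ↦ Nat.cast_pos.mpr (α v).factorial_pos
  rw [mul_right_comm]
  exact mul_pos (mul_self_pos.mpr (mem_support_iff.mp hα)) factorial_pos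

end Apolar

section Graph

lemma inf_eq_sup_iff_isDiag {α : Type*} [Lattice α] {e : Sym2 α} :
    e.inf = e.sup ↔ e.IsDiag := by
  induction e with
  | _ a b => simp

lemma mem_iff_eq_inf_or_eq_sup {α : Type*} [LinearOrder α] {e : Sym2 α} {v : α} :
    v ∈ e ↔ v = e.inf ∨ v = e.sup := by
  induction e with
  | _ a b => rcases le_total a b with h | h <;> simp [h, or_comm]

lemma sum_ite_mem_eq_inf_add_sup {α M : Type*} [Fintype α] [LinearOrder α] [AddCommMonoid M]
    {e : Sym2 α} (he : ¬e.IsDiag) (f : α → M) :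
    (∑ v, if v ∈ e then f v else 0) = f e.inf + f e.sup := by
  have endpoints : ({v | v ∈ e} : Finset α) = {e.inf, e.sup} := by
    ext v
    simp [mem_iff_eq_inf_or_eq_sup]
  rw [← Finset.sum_filter, endpoints, Finset.sum_pair (inf_eq_sup_iff_isDiag.not.mpr he)]

variable {n : ℕ} (G : SimpleGraph (Fin n)) [DecidableRel G.Adj]

/-- The vertex-edge incidence matrix of `G` over `ℂ`. Unlike those of `SimpleGraph.incMatrix`, its
columns are indexed by the edges of `G` only, so that they correspond to the variables of `P_G`. -/
def edgeIncMatrix : Matrix (Fin n) G.edgeFinset ℂ :=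
  .of fun v e ↦ if v ∈ e.val then 1 else 0

lemma toMvPolynomial_edgeIncMatrix (v : Fin n) :
    (edgeIncMatrix G).toMvPolynomial v = ∑ e : G.edgeFinset, if v ∈ e.val then X e else 0 := by
  simp [toMvPolynomial_eq_sum_smul_X, edgeIncMatrix]

lemma toMvPolynomial_transpose_edgeIncMatrix (e : G.edgeFinset) :
    (edgeIncMatrix G)ᵀ.toMvPolynomial e = X e.val.inf + X e.val.sup := by
  simp [toMvPolynomial_eq_sum_smul_X, edgeIncMatrix,
    ← sum_ite_mem_eq_inf_add_sup (G.not_isDiag_of_mem_edgeFinset e.2)]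

lemma bind₁_edgeIncMatrix_fAG : bind₁ (edgeIncMatrix G).toMvPolynomial (fAG G) = PG G := by
  simp [fAG, PG, toMvPolynomial_edgeIncMatrix]

lemma bind₁_transpose_edgeIncMatrix_monomial (K : G.edgeFinset → ℕ) :
    bind₁ (edgeIncMatrix G)ᵀ.toMvPolynomial (monomial (Finsupp.equivFunOnFinite.symm K) 1)
      = ∏ e : G.edgeFinset, (X e.val.inf + X e.val.sup) ^ K e := by
  rw [← aeval_eq_bind₁, aeval_monomial, map_one, one_mul, Finsupp.prod_fintype _ _ (by simp)]
  simp [toMvPolynomial_transpose_edgeIncMatrix]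

lemma WEK_eq_span_image_bind₁ (K : G.edgeFinset → ℕ) :
    WEK G K = Submodule.span ℂ ((fun α ↦ bind₁ (edgeIncMatrix G)ᵀ.toMvPolynomial (monomial α 1)) ''
      (Finsupp.equivFunOnFinite.symm '' Set.Iic K)) := by
  rw [WEK, Set.image_image]
  simp only [bind₁_transpose_edgeIncMatrix_monomial]
  congr 1
  ext p
  simp [eq_comm]

-- The pairing over `ℂ` has isotropic vectors, such as `X_0 + i X_1`; positivity holds over `ℤ`.
lemma apolar_fAG_self_ne_zero : apolar (Fin n) ℂ (fAG G) (fAG G) ≠ 0 := by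
  let f : MvPolynomial (Fin n) ℤ := ∏ e : G.edgeFinset, (X e.val.inf - X e.val.sup)
  have map_f : map (Int.castRingHom ℂ) f = fAG G := by simp [f, fAG]
  have f_ne_zero : f ≠ 0 := Finset.prod_ne_zero_iff.mpr fun e _ ↦
    sub_ne_zero.mpr fun h ↦
      G.not_isDiag_of_mem_edgeFinset e.2 (inf_eq_sup_iff_isDiag.mp (X_injective h))
  rw [← map_f, apolar_map]
  exact Int.cast_ne_zero.mpr (apolar_self_pos f_ne_zero).ne'

lemma isHomogeneous_fAG : (fAG G).IsHomogeneous G.edgeFinset.card := by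
  simpa [fAG] using IsHomogeneous.prod Finset.univ _ (fun _ : G.edgeFinset ↦ 1)
    fun e _ ↦ (isHomogeneous_X ℂ e.val.inf).sub (isHomogeneous_X ℂ e.val.sup)

lemma isHomogeneous_PG : (PG G).IsHomogeneous G.edgeFinset.card := by
  rw [← bind₁_edgeIncMatrix_fAG]
  simpa using (isHomogeneous_fAG G).aeval _ (edgeIncMatrix G).toMvPolynomial_isHomogeneous

lemma sum_eq_card_edgeFinset_of_coeff_PG_ne_zero {K : G.edgeFinset → ℕ}
    (hK : coeff (Finsupp.equivFunOnFinite.symm K) (PG G) ≠ 0) :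
    ∑ e, K e = G.edgeFinset.card := by
  by_contra hne
  exact hK ((isHomogeneous_PG G).coeff_eq_zero (by simpa [Finsupp.degree_eq_sum] using hne))

lemma sufficientFor_of_mem_WEK {K : G.edgeFinset → ℕ} (h : fAG G ∈ WEK G K) :
    SufficientFor G K := by
  rw [WEK_eq_span_image_bind₁] at h
  obtain ⟨_, ⟨K', hK', rfl⟩, hcoeff⟩ :=
    exists_coeff_bind₁_ne_zero_of_mem_span _ h (apolar_fAG_self_ne_zero G)
  exact ⟨K', hK', bind₁_edgeIncMatrix_fAG G ▸ hcoeff⟩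

end Graph

/-- If `K(e) ≤ b` for every edge and `f_{A_G} ∈ W_E^K`, then `K` is sufficient for `G`;
consequently `G` is algebraic total weight `(1, b+1)`-choosable, i.e. there is
`K' : E → ℕ` with `Σ_e K' e = |E|`, `K' e ≤ b` for all `e`, and the coefficient of
`x^{K'}` in `P_G` nonzero. -/
theorem sufficient_of_mem_WEK {n b : ℕ} (G : SimpleGraph (Fin n)) [DecidableRel G.Adj]
    (K : ↥G.edgeFinset → ℕ) (hb : ∀ e, K e ≤ b) (h : fAG G ∈ WEK G K) :
    SufficientFor G K ∧
      ∃ K' : ↥G.edgeFinset → ℕ, (∑ e, K' e) = G.edgeFinset.card ∧ (∀ e, K' e ≤ b) ∧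
        MvPolynomial.coeff (Finsupp.equivFunOnFinite.symm K') (PG G) ≠ 0 := by
  obtain ⟨K', hK', hcoeff⟩ := sufficientFor_of_mem_WEK G h
  exact ⟨⟨K', hK', hcoeff⟩, K', sum_eq_card_edgeFinset_of_coeff_PG_ne_zero G hcoeff,
    fun e ↦ (hK' e).trans (hb e), hcoeff⟩
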